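/- There are exactly four pairs (X₁, X₂) of positive real numbers satisfying the Einstein system with parameters γ₁ = 1/2, γ₂ = 1/6, b₁ = 1/24, b₂ = 1/8, r = 1/2. (This is the algebraic content of the theorem: the bisymmetric fibration of Type II corresponding to the triple (𝔢₆, 𝔰𝔲₆ ⊕ 𝔰𝔲₂, 𝔰𝔲₅ ⊕ ℝ ⊕ ℝ) admits, up to homothety, exactly four Einstein adapted metrics.) -/

import Mathlib

/-- The Einstein system (E1)–(E2) for a Type II bisymmetric fibration,
in unknowns `X₁ X₂` with parameters `γ₁ γ₂ b₁ b₂ r`. -/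
def EinsteinSystem (γ₁ γ₂ b₁ b₂ r X₁ X₂ : ℝ) : Prop :=
  2*γ₁*X₁^2*X₂ + (1-γ₁)*X₂ - 2*γ₂*X₁*X₂^2 - (1-γ₂)*X₁ = 0 ∧
  2*b₁*X₂ + 2*b₂*X₁ - 4*r*X₁*X₂ + 2*γ₁*X₁^2*X₂ + (1-γ₁)*X₂ = 0

/-- The quartic obtained from the Einstein system by eliminating the second unknown. -/
noncomputable def einsteinQuartic : Polynomial ℝ :=
  .C 234 * .X ^ 4 + .C (-828) * .X ^ 3 + .C 993 * .X ^ 2 + .C (-474) * .X + .C 77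

theorem einsteinQuartic_eval (x : ℝ) :
    einsteinQuartic.eval x = 234 * x ^ 4 - 828 * x ^ 3 + 993 * x ^ 2 - 474 * x + 77 := by
  simp [einsteinQuartic]
  ring

theorem einsteinQuartic_natDegree : einsteinQuartic.natDegree = 4 := by
  unfold einsteinQuartic
  compute_degree!

theorem einsteinQuartic_ne_zero : einsteinQuartic ≠ 0 := by
  intro h
  have := einsteinQuartic_natDegree
  simp [h] at this

theorem exists_root_Ioo_of_neg {p : Polynomial ℝ} {s t : ℝ} (hst : s ≤ t)
    (h : p.eval s * p.eval t < 0) : ∃ x ∈ Set.Ioo s t, p.eval x = 0 := by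
  rcases mul_neg_iff.1 h with ⟨hs, ht⟩ | ⟨hs, ht⟩
  · exact intermediate_value_Ioo' hst p.continuous.continuousOn ⟨ht, hs⟩
  · exact intermediate_value_Ioo hst p.continuous.continuousOn ⟨hs, ht⟩

/-- The quartic has exactly four real roots, all of them in `(9/25, 8/5)`. -/
theorem einsteinQuartic_roots :
    einsteinQuartic.roots.toFinset.card = 4 ∧
      ∀ x ∈ einsteinQuartic.roots.toFinset, x ∈ Set.Ioo (9 / 25 : ℝ) (8 / 5) := by
  obtain ⟨a, ⟨ha, ha'⟩, pa⟩ := exists_root_Ioo_of_neg (p := einsteinQuartic)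
    (s := 9 / 25) (t := 1 / 2) (by norm_num) (by simp only [einsteinQuartic_eval]; norm_num)
  obtain ⟨b, ⟨hb, hb'⟩, pb⟩ := exists_root_Ioo_of_neg (p := einsteinQuartic)
    (s := 1 / 2) (t := 1) (by norm_num) (by simp only [einsteinQuartic_eval]; norm_num)
  obtain ⟨c, ⟨hc, hc'⟩, pc⟩ := exists_root_Ioo_of_neg (p := einsteinQuartic)
    (s := 1) (t := 6 / 5) (by norm_num) (by simp only [einsteinQuartic_eval]; norm_num)
  obtain ⟨d, ⟨hd, hd'⟩, pd⟩ := exists_root_Ioo_of_neg (p := einsteinQuartic)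
    (s := 6 / 5) (t := 8 / 5) (by norm_num) (by simp only [einsteinQuartic_eval]; norm_num)
  have hcard : ({a, b, c, d} : Finset ℝ).card = 4 := by
    rw [Finset.card_insert_of_notMem, Finset.card_insert_of_notMem, Finset.card_pair]
    · linarith
    · simp only [Finset.mem_insert, Finset.mem_singleton]
      rintro (h | h) <;> linarith
    · simp only [Finset.mem_insert, Finset.mem_singleton]
      rintro (h | h | h) <;> linarith
  have hsub : ({a, b, c, d} : Finset ℝ) ⊆ einsteinQuartic.roots.toFinset := by
    intro x hx
    simp only [Finset.mem_insert, Finset.mem_singleton] at hx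
    rw [Multiset.mem_toFinset, Polynomial.mem_roots einsteinQuartic_ne_zero]
    rcases hx with rfl | rfl | rfl | rfl <;> assumption
  have hle : einsteinQuartic.roots.toFinset.card ≤ 4 :=
    einsteinQuartic_natDegree ▸
      (Multiset.toFinset_card_le _).trans (Polynomial.card_roots' _)
  have heq := Finset.eq_of_subset_of_card_le hsub (by rw [hcard]; exact hle)
  rw [← heq]
  refine ⟨hcard, fun x hx => ?_⟩
  simp only [Finset.mem_insert, Finset.mem_singleton] at hx
  rcases hx with rfl | rfl | rfl | rfl <;> constructor <;> linarith

/-- The positive solutions are the points `(x, 3 x / (24 x - 7 - 12 x ^ 2))` over the roots `x`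
of the quartic. -/
theorem einsteinSystem_pos_solutions_eq_image :
    {P : ℝ × ℝ | 0 < P.1 ∧ 0 < P.2 ∧
      EinsteinSystem (1/2) (1/6) (1/24) (1/8) (1/2) P.1 P.2} =
    (fun x : ℝ => (x, 3 * x / (24 * x - 7 - 12 * x ^ 2))) ''
      (einsteinQuartic.roots.toFinset : Set ℝ) := by
  ext ⟨x, y⟩
  simp only [Set.mem_ofPred_eq, Set.mem_image, Finset.mem_coe, Prod.mk.injEq, EinsteinSystem]
  constructor
  · rintro ⟨hx, hy, h₁, h₂⟩
    have hyD : y * (24 * x - 7 - 12 * x ^ 2) = 3 * x := by linarith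
    have hD : 24 * x - 7 - 12 * x ^ 2 ≠ 0 := by
      intro h
      rw [h] at hyD
      linarith
    have hy_eq : y = 3 * x / (24 * x - 7 - 12 * x ^ 2) := by rw [eq_div_iff hD, hyD]
    refine ⟨x, ?_, rfl, hy_eq.symm⟩
    rw [Multiset.mem_toFinset, Polynomial.mem_roots einsteinQuartic_ne_zero, Polynomial.IsRoot,
      einsteinQuartic_eval]
    refine (mul_eq_zero.1 (?_ : x * _ = 0)).resolve_left hx.ne'
    linear_combination -(3 / 2) * (24 * x - 7 - 12 * x ^ 2) ^ 2 * h₁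
      + (1 / 4) * ((6 * x ^ 2 + 3) * (24 * x - 7 - 12 * x ^ 2)
        - 2 * x * (y * (24 * x - 7 - 12 * x ^ 2) + 3 * x)) * hyD
  · rintro ⟨z, hz, rfl, rfl⟩
    obtain ⟨hlo, hhi⟩ := einsteinQuartic_roots.2 z hz
    rw [Multiset.mem_toFinset, Polynomial.mem_roots einsteinQuartic_ne_zero, Polynomial.IsRoot,
      einsteinQuartic_eval] at hz
    have hz₀ : 0 < z := by linarith
    have hD : 0 < 24 * z - 7 - 12 * z ^ 2 := by nlinarith
    have hyD := div_mul_cancel₀ (3 * z) hD.ne'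
    refine ⟨hz₀, by positivity, ?_, ?_⟩
    · generalize 3 * z / (24 * z - 7 - 12 * z ^ 2) = y at hyD ⊢
      refine (mul_eq_zero.1 (?_ : (24 * z - 7 - 12 * z ^ 2) ^ 2 * _ = 0)).resolve_left
        (pow_ne_zero 2 hD.ne')
      linear_combination -(2 / 3) * z * hz
        + (1 / 6) * ((6 * z ^ 2 + 3) * (24 * z - 7 - 12 * z ^ 2)
          - 2 * z * (y * (24 * z - 7 - 12 * z ^ 2) + 3 * z)) * hyD
    · linear_combination -(1 / 12) * hyD

/- STATEMENT 4: exactly four positive solutions for (𝔢₆, 𝔰𝔲₆⊕𝔰𝔲₂, 𝔰𝔲₅⊕ℝ⊕ℝ). -/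
theorem e6_exactly_four_einstein_adapted_metrics :
    {P : ℝ × ℝ | 0 < P.1 ∧ 0 < P.2 ∧
      EinsteinSystem (1/2) (1/6) (1/24) (1/8) (1/2) P.1 P.2}.ncard = 4 := by
  rw [einsteinSystem_pos_solutions_eq_image, Set.ncard_image_of_injective _
    fun _ _ h => congrArg Prod.fst h, Set.ncard_coe_finset]
  exact einsteinQuartic_roots.1
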